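/- Let f : ℝ² → ℝ² be smooth with Df(u) strictly hyperbolic (two distinct real eigenvalues λ₁(u) < λ₂(u)) near u = 0, written in Riemann coordinates (w₁, w₂) so that smooth solutions satisfy w_{i,t} + λᵢ(w₁,w₂) w_{i,x} = 0. Then there exists a smooth flux f̃ defined near 0, whose associated 2×2 system is of Temple class (integral curves of both eigenvector fields are straight lines) and whose eigenvalues μ₁, μ₂ in the same Riemann coordinates satisfy μᵢ(0,0) = λᵢ(0,0) and ∂μᵢ/∂w_j(0,0) = ∂λᵢ/∂w_j(0,0) for all i, j ∈ {1,2}. -/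

import Mathlib

/-- The two coordinate directions in the plane of Riemann coordinates. -/
def rc : Fin 2 → ℝ × ℝ := ![(1, 0), (0, 1)]

lemma fd0 {E : Type*} [NormedAddCommGroup E] [NormedSpace ℝ E] {F : ℝ × ℝ → E} {w : ℝ × ℝ} {a : E}
    (hF : DifferentiableAt ℝ F w) (h : HasDerivAt (fun t => F (t, w.2)) a w.1) :
    fderiv ℝ F w (rc 0) = a := by
  have h1 : HasDerivAt (fun t : ℝ => (t, w.2)) ((1 : ℝ), (0 : ℝ)) w.1 :=
    (hasDerivAt_id w.1).prodMk (hasDerivAt_const w.1 w.2)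
  have h2 : HasFDerivAt F (fderiv ℝ F w) ((fun t : ℝ => (t, w.2)) w.1) := hF.hasFDerivAt
  exact (h2.comp_hasDerivAt w.1 h1).unique h

lemma fd1 {E : Type*} [NormedAddCommGroup E] [NormedSpace ℝ E] {F : ℝ × ℝ → E} {w : ℝ × ℝ} {a : E}
    (hF : DifferentiableAt ℝ F w) (h : HasDerivAt (fun t => F (w.1, t)) a w.2) :
    fderiv ℝ F w (rc 1) = a := by
  have h1 : HasDerivAt (fun t : ℝ => (w.1, t)) ((0 : ℝ), (1 : ℝ)) w.2 :=
    (hasDerivAt_const w.2 w.1).prodMk (hasDerivAt_id w.2)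
  have h2 : HasFDerivAt F (fderiv ℝ F w) ((fun t : ℝ => (w.1, t)) w.2) := hF.hasFDerivAt
  exact (h2.comp_hasDerivAt w.2 h1).unique h

/-- quadratic -/
lemma hd_quad (a b t : ℝ) : HasDerivAt (fun t : ℝ => a * t + b * t ^ 2 / 2) (a + b * t) t := by
  have := ((hasDerivAt_id t).const_mul a).add ((((hasDerivAt_id t).pow 2).const_mul b).div_const 2)
  refine this.congr_deriv ?_
  simp
  ring

lemma hd_aff (c p t : ℝ) : HasDerivAt (fun t : ℝ => c + p * t) p t := by
  have := ((hasDerivAt_id t).const_mul p).const_add c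
  simpa using this

theorem temple_aux (a b c d p q : ℝ) (hac : a < c) :
    ∃ (U : Set (ℝ × ℝ)) (uu g : (ℝ × ℝ) → ℝ × ℝ) (mu : Fin 2 → (ℝ × ℝ) → ℝ),
      U ∈ nhds ((0, 0) : ℝ × ℝ) ∧ IsOpen U ∧
      ContDiffOn ℝ (⊤ : ℕ∞) uu U ∧ ContDiffOn ℝ (⊤ : ℕ∞) g U ∧ (∀ i, ContDiffOn ℝ (⊤ : ℕ∞) (mu i) U) ∧
      Set.InjOn uu U ∧
      (∀ w ∈ U, mu 0 w < mu 1 w) ∧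
      (∀ w ∈ U, ∀ i, fderiv ℝ uu w (rc i) ≠ 0) ∧
      (∀ w ∈ U, ∀ i, fderiv ℝ g w (rc i) = mu i w • fderiv ℝ uu w (rc i)) ∧
      (∀ w ∈ U, ∀ i, ∃ κ : ℝ,
        fderiv ℝ (fun z => fderiv ℝ uu z (rc i)) w (rc i) = κ • fderiv ℝ uu w (rc i)) ∧
      mu 0 (0, 0) = a ∧ mu 1 (0, 0) = c ∧
      fderiv ℝ (mu 0) (0, 0) (rc 0) = b ∧ fderiv ℝ (mu 0) (0, 0) (rc 1) = q * (a - c) ∧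
      fderiv ℝ (mu 1) (0, 0) (rc 0) = p * (c - a) ∧ fderiv ℝ (mu 1) (0, 0) (rc 1) = d := by
  let D : ℝ × ℝ → ℝ := fun w => 1 + p * w.1 + q * w.2
  let K : ℝ × ℝ → ℝ := fun w => p * (a * w.1 + b * w.1 ^ 2 / 2) + q * (c * w.2 + d * w.2 ^ 2 / 2)
  let uu : ℝ × ℝ → ℝ × ℝ := fun w => (w.1 / D w, w.2 / D w)
  let g : ℝ × ℝ → ℝ × ℝ := fun w =>
    ((a * w.1 + b * w.1 ^ 2 / 2) - K w * (w.1 / D w), (c * w.2 + d * w.2 ^ 2 / 2) - K w * (w.2 / D w))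
  let m0 : ℝ × ℝ → ℝ := fun w => (a + b * w.1) * D w - K w
  let m1 : ℝ × ℝ → ℝ := fun w => (c + d * w.2) * D w - K w
  let U : Set (ℝ × ℝ) := {w | 0 < D w ∧ m0 w < m1 w}
  have cD : ContDiff ℝ (⊤ : ℕ∞) D := by fun_prop
  have cK : ContDiff ℝ (⊤ : ℕ∞) K := by fun_prop
  have cm0 : ContDiff ℝ (⊤ : ℕ∞) m0 := by fun_prop
  have cm1 : ContDiff ℝ (⊤ : ℕ∞) m1 := by fun_prop
  have hUo : IsOpen U :=
    (isOpen_lt continuous_const cD.continuous).inter (isOpen_lt cm0.continuous cm1.continuous)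
  have hD : ∀ w ∈ U, D w ≠ 0 := fun w hw => hw.1.ne'
  have cu : ContDiffOn ℝ (⊤ : ℕ∞) uu U :=
    (contDiff_fst.contDiffOn.div cD.contDiffOn hD).prodMk (contDiff_snd.contDiffOn.div cD.contDiffOn hD)
  have cg : ContDiffOn ℝ (⊤ : ℕ∞) g U := by
    refine ContDiffOn.prodMk ?_ ?_
    · refine ContDiffOn.sub (by fun_prop) (cK.contDiffOn.mul
        (contDiff_fst.contDiffOn.div cD.contDiffOn hD))
    · refine ContDiffOn.sub (by fun_prop) (cK.contDiffOn.mul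
        (contDiff_snd.contDiffOn.div cD.contDiffOn hD))
  have du : ∀ w ∈ U, DifferentiableAt ℝ uu w := fun w hw =>
    (cu.differentiableOn (by simp)).differentiableAt (hUo.mem_nhds hw)
  have dg : ∀ w ∈ U, DifferentiableAt ℝ g w := fun w hw =>
    (cg.differentiableOn (by simp)).differentiableAt (hUo.mem_nhds hw)
  have D0 : ∀ w : ℝ × ℝ, HasDerivAt (fun t => D (t, w.2)) p w.1 := fun w =>
    ((hd_aff 1 p w.1).add_const (q * w.2))
  have D1 : ∀ w : ℝ × ℝ, HasDerivAt (fun t => D (w.1, t)) q w.2 := fun w =>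
    (hd_aff (1 + p * w.1) q w.2)
  have K0 : ∀ w : ℝ × ℝ, HasDerivAt (fun t => K (t, w.2)) (p * (a + b * w.1)) w.1 := fun w =>
    ((hd_quad a b w.1).const_mul p).add_const (q * (c * w.2 + d * w.2 ^ 2 / 2))
  have K1 : ∀ w : ℝ × ℝ, HasDerivAt (fun t => K (w.1, t)) (q * (c + d * w.2)) w.2 := fun w =>
    ((hd_quad c d w.2).const_mul q).const_add (p * (a * w.1 + b * w.1 ^ 2 / 2))
  -- derivative of uu
  have x0 : ∀ w ∈ U, HasDerivAt (fun t => t / D (t, w.2)) ((1 + q * w.2) / D w ^ 2) w.1 := by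
    intro w hw
    refine ((hasDerivAt_id w.1).div (D0 w) (hD w hw)).congr_deriv ?_
    simp only [id, D]; ring
  have y0 : ∀ w ∈ U, HasDerivAt (fun t => w.2 / D (t, w.2)) ((-p * w.2) / D w ^ 2) w.1 := by
    intro w hw
    refine ((hasDerivAt_const w.1 w.2).div (D0 w) (hD w hw)).congr_deriv ?_
    simp only [D]; ring
  have x1 : ∀ w ∈ U, HasDerivAt (fun t => w.1 / D (w.1, t)) ((-q * w.1) / D w ^ 2) w.2 := by
    intro w hw
    refine ((hasDerivAt_const w.2 w.1).div (D1 w) (hD w hw)).congr_deriv ?_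
    simp only [D]; ring
  have y1 : ∀ w ∈ U, HasDerivAt (fun t => t / D (w.1, t)) ((1 + p * w.1) / D w ^ 2) w.2 := by
    intro w hw
    refine ((hasDerivAt_id w.2).div (D1 w) (hD w hw)).congr_deriv ?_
    simp only [id, D]; ring
  have u0 : ∀ w ∈ U, fderiv ℝ uu w (rc 0) = ((1 + q * w.2) / D w ^ 2, (-p * w.2) / D w ^ 2) :=
    fun w hw => fd0 (du w hw) ((x0 w hw).prodMk (y0 w hw))
  have u1 : ∀ w ∈ U, fderiv ℝ uu w (rc 1) = ((-q * w.1) / D w ^ 2, (1 + p * w.1) / D w ^ 2) :=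
    fun w hw => fd1 (du w hw) ((x1 w hw).prodMk (y1 w hw))
  have sq0 : ∀ w ∈ U, ∀ k : ℝ, HasDerivAt (fun t => k / D (t, w.2) ^ 2)
      (-2 * p / D w * (k / D w ^ 2)) w.1 := by
    intro w hw k
    have hk := hD w hw
    refine ((hasDerivAt_const w.1 k).div ((D0 w).pow 2) (pow_ne_zero 2 hk)).congr_deriv ?_
    have e : D (w.1, w.2) = D w := rfl
    simp only [Pi.pow_apply, e]; field_simp; ring
  have sq1 : ∀ w ∈ U, ∀ k : ℝ, HasDerivAt (fun t => k / D (w.1, t) ^ 2)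
      (-2 * q / D w * (k / D w ^ 2)) w.2 := by
    intro w hw k
    have hk := hD w hw
    refine ((hasDerivAt_const w.2 k).div ((D1 w).pow 2) (pow_ne_zero 2 hk)).congr_deriv ?_
    have e : D (w.1, w.2) = D w := rfl
    simp only [Pi.pow_apply, e]; field_simp; ring
  have zU : ((0, 0) : ℝ × ℝ) ∈ U := by
    simp [U, D, m0, m1, K, hac]
  refine ⟨U, uu, g, ![m0, m1], hUo.mem_nhds zU, hUo, cu, cg, ?_, ?_, fun w hw => hw.2, ?_, ?_, ?_,
    ?_, ?_, ?_, ?_, ?_, ?_⟩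
  · intro i
    fin_cases i
    · exact cm0.contDiffOn
    · exact cm1.contDiffOn
  · intro w hw z hz h
    have h1 : w.1 / D w = z.1 / D z := congrArg Prod.fst h
    have h2 : w.2 / D w = z.2 / D z := congrArg Prod.snd h
    have hw' := hD w hw
    have hz' := hD z hz
    have e : ∀ v : ℝ × ℝ, D v ≠ 0 → (D v)⁻¹ = 1 - p * (v.1 / D v) - q * (v.2 / D v) := by
      intro v hv
      field_simp
      simp only [D]; ring
    have h3 : D w = D z := by
      apply inv_injective
      rw [e w hw', e z hz', h1, h2]
    rw [h3] at h1 h2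
    exact Prod.ext ((div_left_inj' hz').1 h1) ((div_left_inj' hz').1 h2)
  · intro w hw i
    have hk := hD w hw
    fin_cases i
    · change fderiv ℝ uu w (rc 0) ≠ 0
      rw [u0 w hw]
      intro h
      simp only [Prod.mk_eq_zero, div_eq_zero_iff, pow_eq_zero_iff two_ne_zero, hk, or_false] at h
      obtain ⟨h1, h2⟩ := h
      rcases mul_eq_zero.1 h2 with h2 | h2
      · have : p = 0 := by linarith
        apply hk
        simp only [D, this]; linarith
      · rw [h2] at h1; simp at h1
    · change fderiv ℝ uu w (rc 1) ≠ 0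
      rw [u1 w hw]
      intro h
      simp only [Prod.mk_eq_zero, div_eq_zero_iff, pow_eq_zero_iff two_ne_zero, hk, or_false] at h
      obtain ⟨h2, h1⟩ := h
      rcases mul_eq_zero.1 h2 with h2 | h2
      · have : q = 0 := by linarith
        apply hk
        simp only [D, this]; linarith
      · rw [h2] at h1; simp at h1
  · intro w hw i
    have hk := hD w hw
    have e : D (w.1, w.2) = D w := rfl
    have e' : K (w.1, w.2) = K w := rfl
    fin_cases i
    · change fderiv ℝ g w (rc 0) = m0 w • fderiv ℝ uu w (rc 0)
      rw [u0 w hw]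
      refine (fd0 (dg w hw) (((hd_quad a b w.1).sub ((K0 w).mul (x0 w hw))).prodMk
        (((K0 w).mul (y0 w hw)).const_sub (c * w.2 + d * w.2 ^ 2 / 2)))).trans ?_
      simp only [e, e', Prod.smul_mk, smul_eq_mul, m0, Prod.mk.injEq]
      have h1 : 1 + q * w.2 = D w - p * w.1 := by simp only [D]; ring
      rw [h1]
      constructor <;> (field_simp; ring)
    · change fderiv ℝ g w (rc 1) = m1 w • fderiv ℝ uu w (rc 1)
      rw [u1 w hw]
      refine (fd1 (dg w hw) ((((K1 w).mul (x1 w hw)).const_sub (a * w.1 + b * w.1 ^ 2 / 2)).prodMk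
        ((hd_quad c d w.2).sub ((K1 w).mul (y1 w hw))))).trans ?_
      simp only [e, e', Prod.smul_mk, smul_eq_mul, m1, Prod.mk.injEq]
      have h1 : 1 + p * w.1 = D w - q * w.2 := by simp only [D]; ring
      rw [h1]
      constructor <;> (field_simp; ring)
  · intro w hw i
    have hk := hD w hw
    have hk2 := pow_ne_zero 2 hk
    have dD : DifferentiableAt ℝ D w := cD.differentiable (by simp) w
    fin_cases i
    · refine ⟨-2 * p / D w, ?_⟩
      change fderiv ℝ (fun z => fderiv ℝ uu z (rc 0)) w (rc 0) = _ • fderiv ℝ uu w (rc 0)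
      have ev : (fun z => fderiv ℝ uu z (rc 0)) =ᶠ[nhds w]
          fun z => ((1 + q * z.2) / D z ^ 2, (-p * z.2) / D z ^ 2) :=
        Filter.eventually_of_mem (hUo.mem_nhds hw) u0
      rw [ev.fderiv_eq, u0 w hw]
      refine fd0 ?_ ((sq0 w hw (1 + q * w.2)).prodMk (sq0 w hw (-p * w.2)))
      exact DifferentiableAt.prodMk ((ContDiffAt.div (n := 1) (by fun_prop) ((cD.of_le (by simp)).contDiffAt.pow 2) hk2).differentiableAt (by simp))
        ((ContDiffAt.div (n := 1) (by fun_prop) ((cD.of_le (by simp)).contDiffAt.pow 2) hk2).differentiableAt (by simp))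
    · refine ⟨-2 * q / D w, ?_⟩
      change fderiv ℝ (fun z => fderiv ℝ uu z (rc 1)) w (rc 1) = _ • fderiv ℝ uu w (rc 1)
      have ev : (fun z => fderiv ℝ uu z (rc 1)) =ᶠ[nhds w]
          fun z => ((-q * z.1) / D z ^ 2, (1 + p * z.1) / D z ^ 2) :=
        Filter.eventually_of_mem (hUo.mem_nhds hw) u1
      rw [ev.fderiv_eq, u1 w hw]
      refine fd1 ?_ ((sq1 w hw (-q * w.1)).prodMk (sq1 w hw (1 + p * w.1)))
      exact DifferentiableAt.prodMk ((ContDiffAt.div (n := 1) (by fun_prop) ((cD.of_le (by simp)).contDiffAt.pow 2) hk2).differentiableAt (by simp))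
        ((ContDiffAt.div (n := 1) (by fun_prop) ((cD.of_le (by simp)).contDiffAt.pow 2) hk2).differentiableAt (by simp))
  · simp [m0, D, K]
  · simp [m1, D, K]
  · refine fd0 (cm0.differentiable (by simp) _) ((((hd_aff a b _).mul (D0 _)).sub (K0 _)).congr_deriv ?_)
    simp [D]; ring
  · refine fd1 (cm0.differentiable (by simp) _) ((((D1 _).const_mul (a + b * 0)).sub (K1 _)).congr_deriv ?_)
    simp; ring
  · refine fd0 (cm1.differentiable (by simp) _) ((((D0 _).const_mul (c + d * 0)).sub (K0 _)).congr_deriv ?_)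
    simp; ring
  · refine fd1 (cm1.differentiable (by simp) _) ((((hd_aff c d _).mul (D1 _)).sub (K1 _)).congr_deriv ?_)
    simp [D]; ring

/-- Any strictly hyperbolic 2×2 system, written in Riemann coordinates with
characteristic speeds λᵢ(w₁,w₂), can be approximated to first order at the origin by a
Temple class system: there is a system (given by a state map `uu` and a flux-in-coordinates
`g` with ∂g/∂wᵢ = μᵢ ∂uu/∂wᵢ) whose eigenvector integral curves are straight lines and whose
eigenvalues μᵢ match λᵢ together with all first derivatives at the origin. -/
theorem stmt19 (lam : Fin 2 → (ℝ × ℝ) → ℝ)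
    (hsm : ∀ i, ContDiff ℝ (⊤ : ℕ∞) (lam i))
    (hsh : lam 0 (0, 0) < lam 1 (0, 0)) :
    ∃ (U : Set (ℝ × ℝ)) (uu g : (ℝ × ℝ) → ℝ × ℝ) (mu : Fin 2 → (ℝ × ℝ) → ℝ),
      U ∈ nhds ((0, 0) : ℝ × ℝ) ∧ IsOpen U ∧
      ContDiffOn ℝ (⊤ : ℕ∞) uu U ∧ ContDiffOn ℝ (⊤ : ℕ∞) g U ∧ (∀ i, ContDiffOn ℝ (⊤ : ℕ∞) (mu i) U) ∧
      Set.InjOn uu U ∧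
      (∀ w ∈ U, mu 0 w < mu 1 w) ∧
      (∀ w ∈ U, ∀ i, fderiv ℝ uu w (rc i) ≠ 0) ∧
      (∀ w ∈ U, ∀ i, fderiv ℝ g w (rc i) = mu i w • fderiv ℝ uu w (rc i)) ∧
      (∀ w ∈ U, ∀ i, ∃ κ : ℝ,
        fderiv ℝ (fun z => fderiv ℝ uu z (rc i)) w (rc i) = κ • fderiv ℝ uu w (rc i)) ∧
      (∀ i, mu i (0, 0) = lam i (0, 0)) ∧
      (∀ i j, fderiv ℝ (mu i) (0, 0) (rc j) = fderiv ℝ (lam i) (0, 0) (rc j)) := by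
  have hne : lam 0 (0, 0) - lam 1 (0, 0) ≠ 0 := (sub_neg.2 hsh).ne
  have hne' : lam 1 (0, 0) - lam 0 (0, 0) ≠ 0 := (sub_pos.2 hsh).ne'
  obtain ⟨U, uu, g, mu, h1, h2, h3, h4, h5, h6, h7, h8, h9, h10, e0, e1, e00, e01, e10, e11⟩ :=
    temple_aux (lam 0 (0, 0)) (fderiv ℝ (lam 0) (0, 0) (rc 0)) (lam 1 (0, 0))
      (fderiv ℝ (lam 1) (0, 0) (rc 1))
      (fderiv ℝ (lam 1) (0, 0) (rc 0) / (lam 1 (0, 0) - lam 0 (0, 0)))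
      (fderiv ℝ (lam 0) (0, 0) (rc 1) / (lam 0 (0, 0) - lam 1 (0, 0))) hsh
  rw [div_mul_cancel₀ _ hne] at e01
  rw [div_mul_cancel₀ _ hne'] at e10
  refine ⟨U, uu, g, mu, h1, h2, h3, h4, h5, h6, h7, h8, h9, h10, ?_, ?_⟩
  · exact Fin.forall_fin_two.2 ⟨e0, e1⟩
  · exact Fin.forall_fin_two.2 ⟨Fin.forall_fin_two.2 ⟨e00, e01⟩, Fin.forall_fin_two.2 ⟨e10, e11⟩⟩
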